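/- Specializing the identity Z(w_1 τ(w_2)) = Z(w_1 ⋆ w_2) to w_1 = z_2^{a−1} z_3 z_2^{c−1} and w_2 = z_2^{b−1} z_3 yields ζ({2}^{a−1},3,{2}^{c−1},1,{2}^b) = ζ({2}^{a+b+c}) + ζ({2}^{a−1},3,{2}^{b−1},3,{2}^{c−1}) + ζ({2}^{b−1},3,{2}^{a−1},3,{2}^{c−1}); in particular, as an identity in H^{2,3}, z_2^{a−1} z_3 z_2^{c−1} ⋆ z_2^{b−1} z_3 = z_2^{a+b+c} + z_2^{a−1} z_3 z_2^{b−1} z_3 z_2^{c−1} + z_2^{b−1} z_3 z_2^{a−1} z_3 z_2^{c−1}. -/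

import Mathlib

/-- A word in `ℤ⟨z₂,z₃⟩`, recorded as its list of indices (each `2` or `3`). -/
def IsWord23 (w : List ℕ) : Prop := ∀ k ∈ w, k = 2 ∨ k = 3

/-- Auxiliary star product on *reversed* words (the head of the list is the rightmost
letter `z_k` of the word), with values in the free `ℤ`-module on reversed words. -/
noncomputable def starAux : List ℕ → List ℕ → (List ℕ →₀ ℤ)
  | [], v => Finsupp.single v 1
  | u, [] => Finsupp.single u 1
  | 2 :: u, v => Finsupp.mapDomain (2 :: ·) (starAux u v)
  | u, 2 :: v => Finsupp.mapDomain (2 :: ·) (starAux u v)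
  | 3 :: u, 3 :: v =>
      Finsupp.mapDomain (3 :: ·) (starAux u (3 :: v)) +
      Finsupp.mapDomain (3 :: ·) (starAux (3 :: u) v) +
      Finsupp.mapDomain (fun l => 2 :: 2 :: 2 :: l) (starAux u v)
  | _, _ => 0
termination_by u v => u.length + v.length

/-- The star product of two words of `ℤ⟨z₂,z₃⟩` (written in natural left-to-right order),
as a `ℤ`-linear combination of words. -/
noncomputable def starW (u v : List ℕ) : List ℕ →₀ ℤ :=
  Finsupp.mapDomain List.reverse (starAux u.reverse v.reverse)

/-- The `ℤ`-bilinear extension of the star product to the free `ℤ`-module on words. -/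
noncomputable def starHS : (List ℕ →₀ ℤ) →ₗ[ℤ] (List ℕ →₀ ℤ) →ₗ[ℤ] (List ℕ →₀ ℤ) :=
  Finsupp.lsum ℤ fun u => LinearMap.toSpanSingleton ℤ _
    (Finsupp.lsum ℤ fun v => LinearMap.toSpanSingleton ℤ _ (starW u v))

/-- The multiple zeta value `ζ(k₁,…,k_r)`. -/
noncomputable def mzv (ks : List ℕ) : ℝ :=
  ∑' n : Fin ks.length → ℕ,
    if (∀ i j : Fin ks.length, i < j → n i < n j) ∧ (∀ i, 0 < n i) then
      ∏ i, (1 : ℝ) / (n i : ℝ) ^ ks.get i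
    else 0

theorem sA_nil (v : List ℕ) : starAux [] v = Finsupp.single v 1 := by
  rw [starAux]
theorem sA_nil_right (u : List ℕ) : starAux u [] = Finsupp.single u 1 := by
  cases u <;> rw [starAux]; simp
theorem sA_two (u v : List ℕ) :
    starAux (2 :: u) v = Finsupp.mapDomain (2 :: ·) (starAux u v) := by
  cases v with
  | nil => rw [sA_nil_right, sA_nil_right, Finsupp.mapDomain_single]
  | cons x v => rw [starAux]; simp
theorem sA_three_two (u v : List ℕ) :
    starAux (3 :: u) (2 :: v) = Finsupp.mapDomain (2 :: ·) (starAux (3 :: u) v) := by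
  rw [starAux] <;> simp
theorem sA_three_three (u v : List ℕ) :
    starAux (3 :: u) (3 :: v) = Finsupp.mapDomain (3 :: ·) (starAux u (3 :: v)) +
      Finsupp.mapDomain (3 :: ·) (starAux (3 :: u) v) +
      Finsupp.mapDomain (fun l => 2 :: 2 :: 2 :: l) (starAux u v) := by
  rw [starAux]

theorem sA_rep (p : ℕ) (u v : List ℕ) :
    starAux (List.replicate p 2 ++ u) v
      = Finsupp.mapDomain (List.replicate p 2 ++ ·) (starAux u v) := by
  induction p with
  | zero => simp; exact Finsupp.mapDomain_id.symm
  | succ p ih =>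
    rw [List.replicate_succ, List.cons_append, sA_two, ih, ← Finsupp.mapDomain_comp]
    rfl

theorem sA_three_rep (p : ℕ) (u : List ℕ) :
    starAux (3 :: u) (List.replicate p 2)
      = Finsupp.single (List.replicate p 2 ++ 3 :: u) 1 := by
  induction p with
  | zero => simp [sA_nil_right]
  | succ p ih =>
    rw [List.replicate_succ, sA_three_two, ih, Finsupp.mapDomain_single]
    rfl

theorem star_part (a b c : ℕ) :
    starW (List.replicate a 2 ++ [3] ++ List.replicate c 2)
        (List.replicate b 2 ++ [3])
      = Finsupp.single (List.replicate (a + 1 + (b + 1) + (c + 1)) 2) 1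
        + Finsupp.single (List.replicate a 2 ++ [3] ++ List.replicate b 2
            ++ [3] ++ List.replicate c 2) 1
        + Finsupp.single (List.replicate b 2 ++ [3] ++ List.replicate a 2
            ++ [3] ++ List.replicate c 2) 1 := by
  have h : starAux (List.replicate a 2) (3 :: List.replicate b 2)
      = Finsupp.single (List.replicate a 2 ++ 3 :: List.replicate b 2) 1 := by
    have := sA_rep a [] (3 :: List.replicate b 2)
    simpa [sA_nil, Finsupp.mapDomain_single] using this
  have h2 : starAux (List.replicate a 2) (List.replicate b 2)
      = Finsupp.single (List.replicate (a + b) 2) 1 := by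
    have := sA_rep a [] (List.replicate b 2)
    simpa [sA_nil, Finsupp.mapDomain_single] using this
  unfold starW
  simp only [List.reverse_append, List.reverse_replicate, List.reverse_singleton,
    List.singleton_append]
  rw [sA_rep, sA_three_three, h, h2, sA_three_rep]
  simp only [Finsupp.mapDomain_add, Finsupp.mapDomain_single]
  have e : (List.replicate c 2 ++ 2 :: 2 :: 2 :: List.replicate (a + b) 2).reverse
      = List.replicate (a + 1 + (b + 1) + (c + 1)) 2 := by
    rw [List.eq_replicate_iff]
    constructor
    · simp; omega
    · intro x hx
      simp at hx
      omega
  rw [e]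
  simp only [List.reverse_append, List.reverse_replicate, List.reverse_cons, List.reverse_nil,
    List.append_assoc, List.nil_append]
  abel
open scoped ENNReal in
/-- weight -/
noncomputable def wt (k n n' : ℕ) : ℝ≥0∞ :=
  if n < n' then ENNReal.ofReal (1 / (n' : ℝ) ^ k) else 0

open scoped ENNReal in
noncomputable def wtC (k : ℕ) (L : ℕ∞) (l : ℕ) : ℝ≥0∞ :=
  if (l : ℕ∞) < L then wt k 0 l else 0

open scoped ENNReal in
abbrev FF := ℕ → ℕ → ℕ∞ → ℝ≥0∞

noncomputable def opA (k : ℕ) : AddMonoid.End FF where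
  toFun f := fun n m l => ∑' n', wt k n n' * f n' m l
  map_zero' := by ext; simp
  map_add' f g := by ext n m l; simp [mul_add, ENNReal.tsum_add]
noncomputable def opB (k : ℕ) : AddMonoid.End FF where
  toFun f := fun n m l => ∑' m', wt k m m' * f n m' l
  map_zero' := by ext; simp
  map_add' f g := by ext n m l; simp [mul_add, ENNReal.tsum_add]
noncomputable def opC (k : ℕ) : AddMonoid.End FF where
  toFun f := fun n m l => ∑' l' : ℕ, wtC k l l' * f n m l'
  map_zero' := by ext; simp
  map_add' f g := by ext n m l; simp [mul_add, ENNReal.tsum_add]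

theorem opA_apply (k f n m l) : opA k f n m l = ∑' n', wt k n n' * f n' m l := rfl
theorem opB_apply (k f n m l) : opB k f n m l = ∑' m', wt k m m' * f n m' l := rfl
theorem opC_apply (k f n m l) : opC k f n m l = ∑' l' : ℕ, wtC k l l' * f n m l' := rfl

theorem comm_AB (j k : ℕ) : Commute (opA j) (opB k) := by
  ext f n m l
  change opA j (opB k f) n m l = opB k (opA j f) n m l
  simp only [opA_apply, opB_apply, ← ENNReal.tsum_mul_left]
  rw [ENNReal.tsum_comm]
  simp only [mul_left_comm]
theorem comm_AC (j k : ℕ) : Commute (opA j) (opC k) := by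
  ext f n m l
  change opA j (opC k f) n m l = opC k (opA j f) n m l
  simp only [opA_apply, opC_apply, ← ENNReal.tsum_mul_left]
  rw [ENNReal.tsum_comm]
  simp only [mul_left_comm]
theorem comm_BC (j k : ℕ) : Commute (opB j) (opC k) := by
  ext f n m l
  change opB j (opC k f) n m l = opC k (opB j f) n m l
  simp only [opB_apply, opC_apply, ← ENNReal.tsum_mul_left]
  rw [ENNReal.tsum_comm]
  simp only [mul_left_comm]

/-- slices -/
def slN : AddMonoid.End FF where
  toFun f := fun _ m l => f 0 m l
  map_zero' := rfl
  map_add' _ _ := rfl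
def slM : AddMonoid.End FF where
  toFun f := fun n _ l => f n 0 l
  map_zero' := rfl
  map_add' _ _ := rfl
theorem slN_B (k) : Commute slN (opB k) := rfl
theorem slN_C (k) : Commute slN (opC k) := rfl
theorem slM_A (k) : Commute slM (opA k) := rfl
theorem slM_C (k) : Commute slM (opC k) := rfl

open scoped ENNReal in
noncomputable def zE : List ℕ → ℕ → ℝ≥0∞
  | [], _ => 1
  | k :: ks, n => ∑' m, wt k n m * zE ks m

open scoped ENNReal in
theorem zE_aux (ks : List ℕ) (n0 : ℕ) :
    ∑' n : Fin ks.length → ℕ,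
      (if (∀ i j : Fin ks.length, i < j → n i < n j) ∧ (∀ i, n0 < n i) then
      ENNReal.ofReal (∏ i, (1 : ℝ) / (n i : ℝ) ^ ks.get i) else 0) = zE ks n0 := by
  induction ks generalizing n0 with
  | nil =>
    rw [zE, tsum_eq_single (fun i => i.elim0)]
    · simp
    · intro b hb; exact absurd (funext fun i => i.elim0) hb
  | cons k ks ih =>
    rw [zE]
    have e := (Fin.consEquiv (fun _ : Fin (ks.length + 1) => ℕ)).tsum_eq
      (fun n : Fin (ks.length + 1) → ℕ =>
      (if (∀ i j : Fin (ks.length+1), i < j → n i < n j) ∧ (∀ i, n0 < n i) then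
      ENNReal.ofReal (∏ i, (1 : ℝ) / (n i : ℝ) ^ (k :: ks).get i) else 0))
    refine e.symm.trans ?_
    rw [ENNReal.tsum_prod']
    refine tsum_congr fun m => ?_
    rw [← ih m, ← ENNReal.tsum_mul_left]
    refine tsum_congr fun n => ?_
    simp only [Fin.consEquiv_apply]
    have hiff : ((∀ i j : Fin (ks.length+1), i < j →
        (Fin.cons m n : Fin (ks.length + 1) → ℕ) i < (Fin.cons m n : Fin (ks.length + 1) → ℕ) j) ∧
        (∀ i, n0 < (Fin.cons m n : Fin (ks.length + 1) → ℕ) i)) ↔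
        n0 < m ∧ ((∀ i j : Fin ks.length, i < j → n i < n j) ∧ (∀ i, m < n i)) := by
      constructor
      · rintro ⟨h1, h2⟩
        refine ⟨by simpa using h2 0, fun i j hij => ?_, fun i => ?_⟩
        · simpa using h1 i.succ j.succ (by simpa using hij)
        · simpa using h1 0 i.succ (Fin.succ_pos i)
      · rintro ⟨h0, h1, h2⟩
        refine ⟨fun i j => ?_, fun i => ?_⟩
        · refine Fin.cases ?_ (fun i => ?_) i <;> refine Fin.cases ?_ (fun j => ?_) j
          · simp
          · intro _; simpa using h2 j
          · simp
          · intro h; simpa using h1 i j (by simpa using h)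
        · refine Fin.cases ?_ (fun i => ?_) i
          · simpa
          · simpa using h0.trans (h2 i)
    unfold wt
    by_cases h0 : n0 < m
    · by_cases h1 : (∀ i j : Fin ks.length, i < j → n i < n j) ∧ (∀ i, m < n i)
      · rw [if_pos (hiff.2 ⟨h0, h1⟩), if_pos h0, if_pos h1, ← ENNReal.ofReal_mul (by positivity),
          Fin.prod_univ_succ]
        simp
      · rw [if_neg (fun h => h1 (hiff.1 h).2), if_neg h1, mul_zero]
    · rw [if_neg (fun h => h0 (hiff.1 h).1), if_neg h0, zero_mul]

theorem mzv_eq (ks : List ℕ) : mzv ks = (zE ks 0).toReal := by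
  rw [← zE_aux, ENNReal.tsum_toReal_eq]
  · unfold mzv
    refine tsum_congr fun n => ?_
    split_ifs
    · rw [ENNReal.toReal_ofReal (Finset.prod_nonneg fun i _ => by positivity)]
    · rfl
  · intro n; split_ifs <;> simp

open scoped ENNReal in
theorem zE_ne_top (ks : List ℕ) (h : ∀ k ∈ ks, 2 ≤ k) : ∃ M : ℝ≥0∞, M ≠ ∞ ∧ ∀ n, zE ks n ≤ M := by
  induction ks with
  | nil => exact ⟨1, by simp, fun n => le_rfl⟩
  | cons k ks ih =>
    obtain ⟨M, hM, hb⟩ := ih (fun k hk => h k (List.mem_cons_of_mem _ hk))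
    refine ⟨(∑' m : ℕ, ENNReal.ofReal (1 / (m : ℝ) ^ k)) * M, ?_, fun n => ?_⟩
    · refine ENNReal.mul_ne_top ?_ hM
      have : Summable fun m : ℕ => 1 / (m : ℝ) ^ k :=
        Real.summable_one_div_nat_pow.2 (h k (by simp))
      exact this.tsum_ofReal_ne_top
    · rw [zE, ← ENNReal.tsum_mul_right]
      refine ENNReal.tsum_le_tsum fun m => ?_
      gcongr
      · unfold wt; split_ifs <;> simp
      · exact hb m
open Nat in
noncomputable def Kr (n m l : ℕ) : ℝ :=
  if n + m < l then
    (n ! * m ! * (l - 1 - n)! * (l - 1 - m)! : ℝ) / ((n + m)! * (l - 1)! * (l - 1 - n - m)!)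
  else 0
open Nat in
noncomputable def Ur (n m l : ℕ) : ℝ :=
  if n + m ≤ l then
    (l * (n ! * m ! * (l - 1 - n)! * (l - 1 - m)!) : ℝ) / ((n + m)! * (l - 1)! * (l - n - m)!)
  else 0
open Nat in
noncomputable def gr (n m : ℕ) : ℝ := (n ! * m ! : ℝ) / (n + m)!

theorem gr_nonneg (n m) : 0 ≤ gr n m := by unfold gr; positivity
theorem Kr_nonneg (n m l) : 0 ≤ Kr n m l := by unfold Kr; split_ifs <;> positivity
theorem Ur_nonneg (n m l) : 0 ≤ Ur n m l := by unfold Ur; split_ifs <;> positivity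
theorem gr_symm (n m) : gr n m = gr m n := by unfold gr; rw [add_comm m n, mul_comm]
theorem Kr_symm (n m l) : Kr n m l = Kr m n l := by
  unfold Kr; rw [add_comm m n, Nat.sub_right_comm (l-1) m n]; congr 2; ring
theorem Ur_symm (n m l) : Ur n m l = Ur m n l := by
  unfold Ur; rw [add_comm m n, Nat.sub_right_comm l m n]; congr 2; ring

open Nat in
theorem Kr_val (n m d : ℕ) : Kr n m (n + m + d + 1) =
    (n ! * m ! * (m + d)! * (n + d)! : ℝ) / ((n + m)! * (n + m + d)! * d !) := by
  unfold Kr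
  rw [if_pos (by omega)]
  have h1 : n + m + d + 1 - 1 - n = m + d := by omega
  have h2 : n + m + d + 1 - 1 - m = n + d := by omega
  have h3 : n + m + d + 1 - 1 - n - m = d := by omega
  have h4 : n + m + d + 1 - 1 = n + m + d := by omega
  rw [h3, h1, h2, h4]
theorem Kr_zero (n m l : ℕ) (h : l ≤ n + m) : Kr n m l = 0 := if_neg (by omega)
theorem Ur_zero (n m l : ℕ) (h : l < n + m) : Ur n m l = 0 := if_neg (by omega)
open Nat in
theorem Ur_val (n m e : ℕ) : Ur (n + 1) (m + 1) (n + 1 + (m + 1) + e) =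
    ((n + m + e + 2) * ((n + 1) ! * (m + 1) ! * (m + e)! * (n + e)!) : ℝ)
      / ((n + m + 2)! * (n + m + e + 1)! * e !) := by
  unfold Ur
  rw [if_pos (by omega)]
  have h1 : n + 1 + (m + 1) + e - 1 - (n + 1) = m + e := by omega
  have h2 : n + 1 + (m + 1) + e - 1 - (m + 1) = n + e := by omega
  have h3 : n + 1 + (m + 1) + e - (n + 1) - (m + 1) = e := by omega
  have h4 : n + 1 + (m + 1) + e - 1 = n + m + e + 1 := by omega
  have h5 : n + 1 + (m + 1) = n + m + 2 := by omega
  rw [h3, h1, h2, h4, h5]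
  push_cast
  ring

theorem R1 (n m l : ℕ) :
    Kr n (m + 1) l = Kr (n + 1) (m + 1) l + (m + 1 : ℝ) / (n + 1) * Ur (n + 1) (m + 1) l := by
  rcases lt_or_ge l (n + 1 + (m + 1)) with h | h
  · rw [Kr_zero _ _ _ (by omega), Kr_zero _ _ _ (by omega), Ur_zero _ _ _ h]; simp
  · obtain ⟨e, rfl⟩ := Nat.exists_eq_add_of_le h
    rw [Ur_val]
    have h1 : n + 1 + (m + 1) + e = n + (m + 1) + e + 1 := by omega
    rw [h1, Kr_val]
    cases e with
    | zero =>
      rw [Kr_zero _ _ _ (by omega)]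
      have h2 : n + (m + 1) = n + m + 1 := by omega
      simp only [h2, Nat.factorial_succ, add_zero, Nat.factorial_zero]
      push_cast
      field_simp
      ring
    | succ e =>
      have h3 : n + (m + 1) + (e + 1) + 1 = (n + 1) + (m + 1) + e + 1 := by omega
      rw [h3, Kr_val]
      have h2 : n + (m + 1) = n + m + 1 := by omega
      have h4 : n + 1 + (m + 1) = n + m + 2 := by omega
      have h5 : m + 1 + e = m + e + 1 := by omega
      have h6 : n + 1 + e = n + e + 1 := by omega
      have h7 : n + m + 2 + e = n + m + e + 1 + 1 := by omega
      have h8 : n + m + 1 + (e + 1) = n + m + e + 1 + 1 := by omega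
      have h9 : m + 1 + (e + 1) = m + e + 1 + 1 := by omega
      have h10 : n + m + (e + 1) + 1 = n + m + e + 1 + 1 := by omega
      have h11 : m + (e + 1) = m + e + 1 := by omega
      have h12 : n + (e + 1) = n + e + 1 := by omega
      simp only [h2, h4, h5, h6, h7, h8, h9, h10, h11, h12, Nat.factorial_succ]
      push_cast
      field_simp
      ring

theorem R3 (n m l : ℕ) :
    Kr (n + 1) (m + 1) (l + 2) = Kr (n + 1) (m + 1) (l + 1)
      + ((n + 1 : ℝ) * (m + 1)) / (l + 1) ^ 2 * Ur (n + 1) (m + 1) (l + 1) := by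
  rcases lt_or_ge (l + 1) (n + 1 + (m + 1)) with h | h
  · rw [Kr_zero _ _ _ (by omega), Kr_zero _ _ _ (by omega), Ur_zero _ _ _ h]; simp
  · obtain ⟨e, he⟩ := Nat.exists_eq_add_of_le h
    have hl : (l : ℝ) = n + m + e + 1 := by
      have : l = n + m + e + 1 := by omega
      rw [this]; push_cast; ring
    have h1 : l + 2 = n + 1 + (m + 1) + e + 1 := by omega
    rw [h1, he, Kr_val, Ur_val, hl]
    cases e with
    | zero =>
      rw [Kr_zero _ _ _ (by omega)]
      have h4 : n + 1 + (m + 1) = n + m + 2 := by omega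
      simp only [h4, Nat.factorial_succ, add_zero, Nat.factorial_zero]
      push_cast
      field_simp
      ring
    | succ e =>
      have h3 : (n + 1) + (m + 1) + (e + 1) = (n + 1) + (m + 1) + e + 1 := by omega
      rw [h3, Kr_val]
      have h4 : n + 1 + (m + 1) = n + m + 2 := by omega
      have h5 : m + 1 + e = m + e + 1 := by omega
      have h6 : n + 1 + e = n + e + 1 := by omega
      have h7 : n + m + 2 + e = n + m + e + 1 + 1 := by omega
      have h8 : m + 1 + (e + 1) = m + e + 1 + 1 := by omega
      have h9 : n + 1 + (e + 1) = n + e + 1 + 1 := by omega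
      have h10 : n + m + (e + 1) + 1 = n + m + e + 1 + 1 := by omega
      have h11 : m + (e + 1) = m + e + 1 := by omega
      have h12 : n + (e + 1) = n + e + 1 := by omega
      simp only [h4, h5, h6, h7, h8, h9, h10, h11, h12, Nat.factorial_succ]
      push_cast
      field_simp
      ring

theorem R4 (n m l : ℕ) :
    Ur (n + 1) (m + 1) (l + 1) = Kr (n + 1) (m + 1) (l + 1)
      + ((n + 1 : ℝ) + (m + 1)) / (l + 1) * Ur (n + 1) (m + 1) (l + 1) := by
  rcases lt_or_ge (l + 1) (n + 1 + (m + 1)) with h | h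
  · rw [Kr_zero _ _ _ (by omega), Ur_zero _ _ _ h]; simp
  · obtain ⟨e, he⟩ := Nat.exists_eq_add_of_le h
    have hl : (l : ℝ) = n + m + e + 1 := by
      have : l = n + m + e + 1 := by omega
      rw [this]; push_cast; ring
    rw [he, Ur_val, hl]
    cases e with
    | zero =>
      rw [Kr_zero _ _ _ (by omega)]
      push_cast
      field_simp
      ring
    | succ e =>
      have h3 : (n + 1) + (m + 1) + (e + 1) = (n + 1) + (m + 1) + e + 1 := by omega
      rw [h3, Kr_val]
      have h4 : n + 1 + (m + 1) = n + m + 2 := by omega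
      have h5 : m + 1 + e = m + e + 1 := by omega
      have h6 : n + 1 + e = n + e + 1 := by omega
      have h7 : n + m + 2 + e = n + m + e + 1 + 1 := by omega
      have h10 : n + m + (e + 1) + 1 = n + m + e + 1 + 1 := by omega
      have h11 : m + (e + 1) = m + e + 1 := by omega
      have h12 : n + (e + 1) = n + e + 1 := by omega
      simp only [h4, h5, h6, h7, h10, h11, h12, Nat.factorial_succ]
      push_cast
      field_simp
      ring

theorem R1top (n m : ℕ) :
    gr n m = gr (n + 1) m + (m : ℝ) / (n + 1) * gr (n + 1) m := by
  unfold gr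
  have h : n + 1 + m = n + m + 1 := by omega
  rw [h]
  simp only [Nat.factorial_succ]
  push_cast
  field_simp
  ring

open Filter Topology in
theorem gr_tendsto (m : ℕ) : Tendsto (fun n => gr n (m + 1)) atTop (𝓝 0) := by
  refine squeeze_zero (fun n => gr_nonneg _ _) (fun n => ?_)
    (tendsto_one_div_add_atTop_nhds_zero_nat (𝕜 := ℝ))
  induction m with
  | zero =>
    unfold gr
    simp only [Nat.factorial_succ]
    push_cast
    field_simp
    simp
  | succ m ih =>
    refine le_trans ?_ ih
    have := R1top (m + 1) n
    rw [gr_symm n, gr_symm n, this]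
    have h2 : 0 ≤ (n : ℝ) / ((m + 1 : ℕ) + 1) * gr (m + 1 + 1) n :=
      mul_nonneg (by positivity) (gr_nonneg _ _)
    linarith

open Filter Topology Nat in
theorem Kr_tendsto_aux (n m : ℕ) : Tendsto (fun d : ℕ =>
    ((m + d)! * (n + d)! : ℝ) / ((n + m + d)! * d !)) atTop (𝓝 1) := by
  induction m with
  | zero =>
    refine tendsto_const_nhds.congr fun d => ?_
    simp only [Nat.add_zero, Nat.zero_add]
    field_simp
  | succ m ih =>
    have h : Tendsto (fun d : ℕ => ((m + 1 : ℝ) + d) / ((n + m + 1 : ℝ) + d)) atTop (𝓝 1) := by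
      have h1 : Tendsto (fun d : ℕ => (n : ℝ) / ((n + m + 1 : ℝ) + d)) atTop (𝓝 0) :=
        tendsto_const_nhds.div_atTop
          (tendsto_atTop_add_const_left _ _ tendsto_natCast_atTop_atTop)
      have h2 := h1.const_sub 1
      rw [sub_zero] at h2
      refine h2.congr fun d => ?_
      field_simp
      ring
    have := ih.mul h
    rw [one_mul] at this
    refine this.congr fun d => ?_
    have h1 : m + 1 + d = m + d + 1 := by omega
    have h2 : n + (m + 1) + d = n + m + d + 1 := by omega
    rw [h1, h2]
    simp only [Nat.factorial_succ]
    push_cast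
    field_simp
    ring

open Filter Topology in
theorem Kr_tendsto (n m : ℕ) : Tendsto (fun l => Kr n m l) atTop (𝓝 (gr n m)) := by
  rw [← tendsto_add_atTop_iff_nat (n + m + 1)]
  have := (Kr_tendsto_aux n m).const_mul (gr n m)
  rw [mul_one] at this
  refine this.congr fun d => ?_
  have h : d + (n + m + 1) = n + m + d + 1 := by omega
  rw [h, Kr_val, gr]
  field_simp
open Filter Topology ENNReal in
theorem telesc_down (f d : ℕ → ℝ≥0∞) (h : ∀ i, f i = f (i + 1) + d (i + 1))
    (h0 : Tendsto f atTop (𝓝 0)) (n : ℕ) : f n = ∑' i, if n < i then d i else 0 := by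
  have key : ∀ M, ∑ i ∈ Finset.range (n + 1 + M), (if n < i then d i else 0) + f (n + M) = f n := by
    intro M
    induction M with
    | zero =>
      rw [Finset.sum_eq_zero]
      · simp
      · intro i hi
        rw [if_neg]
        simp at hi; omega
    | succ M ih =>
      rw [← add_assoc, Finset.sum_range_succ, if_pos (by omega)]
      conv_rhs => rw [← ih, h (n + M)]
      have e : n + 1 + M = n + M + 1 := by omega
      have e2 : n + (M + 1) = n + M + 1 := by omega
      rw [e, e2, add_assoc, add_comm (d _)]
  have t1 : Tendsto (fun M => ∑ i ∈ Finset.range (n + 1 + M), (if n < i then d i else 0)) atTop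
      (𝓝 (∑' i, if n < i then d i else 0)) := by
    have := (ENNReal.summable (f := fun i => if n < i then d i else 0)).hasSum.tendsto_sum_nat
    refine this.comp ?_
    exact tendsto_atTop_mono (fun M => by simp) tendsto_id
  have t2 : Tendsto (fun M => f (n + M)) atTop (𝓝 0) :=
    h0.comp (tendsto_atTop_mono (fun M => by simp) tendsto_id)
  have t3 := t1.add t2
  simp only [key, add_zero] at t3
  exact tendsto_nhds_unique tendsto_const_nhds t3

noncomputable def KR (n m : ℕ) (L : ℕ∞) : ℝ :=
  ENat.recTopCoe (C := fun _ => ℝ) (gr n m) (fun l => Kr n m l) L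
noncomputable def UR (n m : ℕ) (L : ℕ∞) : ℝ :=
  ENat.recTopCoe (C := fun _ => ℝ) (gr n m) (fun l => Ur n m l) L
noncomputable def KE : FF := fun n m L => ENNReal.ofReal (KR n m L)
noncomputable def UE : FF := fun n m L => ENNReal.ofReal (UR n m L)

theorem KE_top (n m) : KE n m ⊤ = ENNReal.ofReal (gr n m) := rfl
theorem UE_top (n m) : UE n m ⊤ = ENNReal.ofReal (gr n m) := rfl
theorem KE_coe (n m) (l : ℕ) : KE n m l = ENNReal.ofReal (Kr n m l) := rfl
theorem UE_coe (n m) (l : ℕ) : UE n m l = ENNReal.ofReal (Ur n m l) := rfl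
theorem KE_symm (n m L) : KE n m L = KE m n L := by
  induction L using ENat.recTopCoe with
  | top => rw [KE_top, KE_top, gr_symm]
  | coe l => rw [KE_coe, KE_coe, Kr_symm]
theorem UE_symm (n m L) : UE n m L = UE m n L := by
  induction L using ENat.recTopCoe with
  | top => rw [UE_top, UE_top, gr_symm]
  | coe l => rw [UE_coe, UE_coe, Ur_symm]

theorem KE_zero_right (n : ℕ) (L : ℕ∞) : KE n 0 L = if (n : ℕ∞) < L then 1 else 0 := by
  induction L using ENat.recTopCoe with
  | top =>
    rw [KE_top, gr]
    have : ((Nat.factorial n : ℕ) : ℝ) ≠ 0 := by positivity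
    simp [this]
  | coe l =>
    rw [KE_coe]
    simp only [Nat.cast_lt]
    split_ifs with h
    · obtain ⟨d, rfl⟩ := Nat.exists_eq_add_of_lt h
      have := Kr_val n 0 d
      rw [add_zero] at this
      rw [this]
      have : ((Nat.factorial n * Nat.factorial 0 * (Nat.factorial (0 + d)) *
        (Nat.factorial (n + d)) : ℕ) : ℝ) ≠ 0 := by positivity
      rw [← ENNReal.ofReal_one]
      congr 1
      simp only [Nat.zero_add, Nat.factorial_zero]
      field_simp
      simp
    · rw [Kr_zero _ _ _ (by omega)]; simp
theorem KE_zero_left (n : ℕ) (L : ℕ∞) : KE 0 n L = if (n : ℕ∞) < L then 1 else 0 := by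
  rw [KE_symm, KE_zero_right]

theorem wt_mul (k n n' : ℕ) : wt (k + 1) n n' * ENNReal.ofReal n' = wt k n n' := by
  unfold wt
  split_ifs with h
  · have : (0 : ℝ) < n' := by exact_mod_cast (by omega : 0 < n')
    rw [← ENNReal.ofReal_mul (by positivity)]
    congr 1
    field_simp
    ring
  · simp
theorem wtC_mul (k : ℕ) (L : ℕ∞) (l : ℕ) :
    wtC (k + 1) L l * ENNReal.ofReal l = wtC k L l := by
  unfold wtC
  split_ifs
  · exact wt_mul _ _ _
  · simp

open Filter Topology ENNReal in
theorem E1 (n m : ℕ) (hm : 0 < m) (L : ℕ∞) :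
    KE n m L = ∑' n', wt 1 n n' * (ENNReal.ofReal m * UE n' m L) := by
  have key : KE n m L = ∑' n', if n < n' then
      (ENNReal.ofReal (1 / (n' : ℝ) ^ 1) * (ENNReal.ofReal m * UE n' m L)) else 0 := by
    refine telesc_down (fun n => KE n m L) (fun n' =>
      (ENNReal.ofReal (1 / (n' : ℝ) ^ 1) * (ENNReal.ofReal m * UE n' m L))) (fun i => ?_) ?_ n
    · obtain ⟨m, rfl⟩ := Nat.exists_eq_succ_of_ne_zero hm.ne'
      induction L using ENat.recTopCoe with
      | top =>
        simp only [KE_top, UE_top]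
        rw [← ENNReal.ofReal_mul (by positivity), ← ENNReal.ofReal_mul (by positivity),
          ← ENNReal.ofReal_add (gr_nonneg _ _)
            (mul_nonneg (by positivity) (mul_nonneg (by positivity) (gr_nonneg _ _))), R1top]
        congr 1
        push_cast
        ring
      | coe l =>
        simp only [KE_coe, UE_coe]
        rw [← ENNReal.ofReal_mul (by positivity), ← ENNReal.ofReal_mul (by positivity),
          ← ENNReal.ofReal_add (Kr_nonneg _ _ _)
            (mul_nonneg (by positivity) (mul_nonneg (by positivity) (Ur_nonneg _ _ _))), R1]
        congr 1
        push_cast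
        ring
    · obtain ⟨m, rfl⟩ := Nat.exists_eq_succ_of_ne_zero hm.ne'
      induction L using ENat.recTopCoe with
      | top =>
        simp only [KE_top]
        rw [← ENNReal.ofReal_zero]
        exact ENNReal.tendsto_ofReal (gr_tendsto m)
      | coe l =>
        refine tendsto_const_nhds.congr' ?_
        filter_upwards [eventually_ge_atTop l] with n hn
        rw [KE_coe, Kr_zero _ _ _ (by omega), ENNReal.ofReal_zero]
  rw [key]
  refine tsum_congr fun n' => ?_
  unfold wt
  split_ifs <;> simp

open Filter Topology ENNReal in
theorem E3 (n m : ℕ) (hn : 0 < n) (hm : 0 < m) (L : ℕ∞) :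
    KE n m L = ∑' l : ℕ, wtC 2 L l * (ENNReal.ofReal n * (ENNReal.ofReal m * UE n m l)) := by
  set d : ℕ → ℝ≥0∞ := fun l => wt 2 0 l * (ENNReal.ofReal n * (ENNReal.ofReal m * UE n m l))
    with hd
  have key : ∀ l : ℕ, ∑ i ∈ Finset.range l, d i = KE n m l := by
    obtain ⟨m, rfl⟩ := Nat.exists_eq_succ_of_ne_zero hm.ne'
    obtain ⟨n, rfl⟩ := Nat.exists_eq_succ_of_ne_zero hn.ne'
    intro l
    induction l with
    | zero => rw [KE_coe, Kr_zero _ _ _ (by omega)]; simp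
    | succ l ih =>
      rw [Finset.sum_range_succ, ih]
      cases l with
      | zero =>
        rw [KE_coe, KE_coe, Kr_zero _ _ _ (by omega), Kr_zero _ _ _ (by omega)]
        simp [hd, wt]
      | succ l =>
        simp only [hd, wt, if_pos (Nat.succ_pos l)]
        rw [KE_coe, KE_coe, UE_coe]
        rw [← ENNReal.ofReal_mul (by positivity), ← ENNReal.ofReal_mul (by positivity),
          ← ENNReal.ofReal_mul (by positivity),
          ← ENNReal.ofReal_add (Kr_nonneg _ _ _)
            (mul_nonneg (by positivity) (mul_nonneg (by positivity) (mul_nonneg (by positivity)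
              (Ur_nonneg _ _ _))))]
        have := R3 n m l
        simp only [Nat.succ_eq_add_one]
        rw [this]
        congr 1
        push_cast
        ring
  induction L using ENat.recTopCoe with
  | top =>
    have t1 := (ENNReal.summable (f := d)).hasSum.tendsto_sum_nat
    simp only [key, KE_coe] at t1
    have t2 := ENNReal.tendsto_ofReal (Kr_tendsto n m)
    rw [KE_top, tendsto_nhds_unique t2 t1]
    refine tsum_congr fun l => ?_
    simp [hd, wtC]
  | coe l =>
    rw [← key, tsum_eq_sum (s := Finset.range l)]
    · refine Finset.sum_congr rfl fun i hi => ?_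
      simp at hi
      simp [hd, wtC, hi]
    · intro b hb
      simp at hb
      simp [wtC, hb]

theorem iB (k n m n' : ℕ) (L : ℕ∞) : wt (k + 1) n n' * KE n' m L
    = ∑' m', wt k n n' * (wt 1 m m' * UE n' m' L) := by
  rcases Nat.eq_zero_or_pos n' with rfl | h
  · simp [wt]
  · rw [KE_symm, E1 _ _ h, ← ENNReal.tsum_mul_left]
    refine tsum_congr fun m' => ?_
    rw [UE_symm, ← wt_mul k]; ring
theorem iA (k n m m' : ℕ) (L : ℕ∞) : wt (k + 1) m m' * KE n m' L
    = ∑' n', wt k m m' * (wt 1 n n' * UE n' m' L) := by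
  rw [KE_symm, iB]
  simp only [UE_symm]

theorem KA_KB : opA 2 KE = opB 2 KE := by
  ext n m L
  rw [opA_apply, opB_apply]
  simp only [iA, iB]
  rw [ENNReal.tsum_comm]
  refine tsum_congr fun m' => tsum_congr fun n' => by ring

theorem KA_KC_aux (n m : ℕ) (hm : 0 < m) (L : ℕ∞) : opA 2 KE n m L = opC 2 KE n m L := by
  rw [opA_apply, opC_apply]
  have h1 : ∀ n', wt 2 n n' * KE n' m L =
      ∑' l : ℕ, wtC 2 L l * (wt 1 n n' * (ENNReal.ofReal m * UE n' m l)) := by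
    intro n'
    rcases Nat.eq_zero_or_pos n' with rfl | h
    · simp [wt]
    · rw [E3 _ _ h hm, ← ENNReal.tsum_mul_left]
      refine tsum_congr fun l => ?_
      rw [← wt_mul 1]; ring
  simp only [h1, E1 _ _ hm (_ : ℕ), ← ENNReal.tsum_mul_left]
  rw [ENNReal.tsum_comm]

theorem KA_KC : opA 2 KE = opC 2 KE := by
  ext n m L
  rcases Nat.eq_zero_or_pos m with rfl | h
  · rcases Nat.eq_zero_or_pos n with rfl | h
    · rw [opA_apply, opC_apply]
      refine tsum_congr fun l => ?_
      simp only [KE_zero_right, wtC, wt]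
      by_cases h1 : 0 < l <;> by_cases h2 : (l : ℕ∞) < L <;> simp [h1, h2]
    · have := KA_KC_aux 0 n h L
      rw [KA_KB, opB_apply]
      rw [opA_apply, opC_apply] at this
      rw [opC_apply]
      simp only [KE_symm n]
      exact this
  · exact KA_KC_aux n m h L

theorem E4 (n m l : ℕ) (hn : 0 < n) (hm : 0 < m) (hl : 0 < l) :
    ENNReal.ofReal l * UE n m l = ENNReal.ofReal l * KE n m l
      + (ENNReal.ofReal n + ENNReal.ofReal m) * UE n m l := by
  obtain ⟨m, rfl⟩ := Nat.exists_eq_succ_of_ne_zero hm.ne'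
  obtain ⟨n, rfl⟩ := Nat.exists_eq_succ_of_ne_zero hn.ne'
  obtain ⟨l, rfl⟩ := Nat.exists_eq_succ_of_ne_zero hl.ne'
  rw [UE_coe, KE_coe, ← ENNReal.ofReal_add (by positivity) (by positivity),
    ← ENNReal.ofReal_mul (by positivity), ← ENNReal.ofReal_mul (by positivity),
    ← ENNReal.ofReal_mul (by positivity),
    ← ENNReal.ofReal_add (mul_nonneg (by positivity) (Kr_nonneg _ _ _))
      (mul_nonneg (by positivity) (Ur_nonneg _ _ _))]
  congr 1
  have := R4 n m l
  simp only [Nat.succ_eq_add_one]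
  push_cast
  field_simp at this
  linarith

theorem K3_pt (n m n' m' l : ℕ) (L : ℕ∞) :
    wt 2 n n' * (wt 2 m m' * (wtC 2 L l * UE n' m' l)) =
      wt 1 n n' * (wt 2 m m' * (wtC 3 L l * UE n' m' l))
      + wt 2 n n' * (wt 1 m m' * (wtC 3 L l * UE n' m' l))
      + wt 2 n n' * (wt 2 m m' * (wtC 2 L l * KE n' m' l)) := by
  rcases Nat.eq_zero_or_pos n' with rfl | hn
  · simp [wt]
  rcases Nat.eq_zero_or_pos m' with rfl | hm
  · simp [wt]
  rcases Nat.eq_zero_or_pos l with rfl | hl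
  · simp [wt, wtC]
  have h := E4 n' m' l hn hm hl
  rw [← wtC_mul 2, ← wt_mul 1 n n', ← wt_mul 1 m m']
  calc _ = wt 2 n n' * wt 2 m m' * wtC 3 L l * (ENNReal.ofReal l * UE n' m' l) := by ring
    _ = _ := by rw [h]; ring

theorem K3 : opA 3 (opB 3 KE) = opB 3 (opC 3 KE) + opA 3 (opC 3 KE)
    + opA 2 (opB 2 (opC 2 KE)) := by
  ext n m L
  change opA 3 (opB 3 KE) n m L = opB 3 (opC 3 KE) n m L + opA 3 (opC 3 KE) n m L
    + opA 2 (opB 2 (opC 2 KE)) n m L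
  have e1 : opA 3 (opB 3 KE) n m L = ∑' n', ∑' m', ∑' l : ℕ,
      wt 2 n n' * (wt 2 m m' * (wtC 2 L l * UE n' m' l)) := by
    simp only [opA_apply, opB_apply, ← ENNReal.tsum_mul_left]
    refine tsum_congr fun n' => tsum_congr fun m' => ?_
    rcases Nat.eq_zero_or_pos n' with rfl | hn
    · simp [wt]
    rcases Nat.eq_zero_or_pos m' with rfl | hm
    · simp [wt]
    rw [E3 _ _ hn hm, ← wt_mul 2 n n', ← wt_mul 2 m m']
    simp only [← ENNReal.tsum_mul_left]
    refine tsum_congr fun l => by ring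
  have e2 : opB 3 (opC 3 KE) n m L = ∑' n', ∑' m', ∑' l : ℕ,
      wt 1 n n' * (wt 2 m m' * (wtC 3 L l * UE n' m' l)) := by
    simp only [opB_apply, opC_apply, ← ENNReal.tsum_mul_left]
    rw [ENNReal.tsum_comm (α := ℕ) (β := ℕ) (f := fun n' m' => ∑' l : ℕ, _)]
    refine tsum_congr fun m' => ?_
    rw [ENNReal.tsum_comm]
    refine tsum_congr fun l => ?_
    rw [mul_left_comm, iA, ← ENNReal.tsum_mul_left]
    refine tsum_congr fun n' => by ring
  have e3 : opA 3 (opC 3 KE) n m L = ∑' n', ∑' m', ∑' l : ℕ,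
      wt 2 n n' * (wt 1 m m' * (wtC 3 L l * UE n' m' l)) := by
    simp only [opA_apply, opC_apply, ← ENNReal.tsum_mul_left]
    refine tsum_congr fun n' => ?_
    rw [ENNReal.tsum_comm]
    refine tsum_congr fun l => ?_
    rw [mul_left_comm, iB, ← ENNReal.tsum_mul_left]
    refine tsum_congr fun n' => by ring
  have e4 : opA 2 (opB 2 (opC 2 KE)) n m L = ∑' n', ∑' m', ∑' l : ℕ,
      wt 2 n n' * (wt 2 m m' * (wtC 2 L l * KE n' m' l)) := by
    simp only [opA_apply, opB_apply, opC_apply, ← ENNReal.tsum_mul_left]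
  rw [e1, e2, e3, e4]
  simp only [← ENNReal.tsum_add, ← K3_pt]

def slT : AddMonoid.End FF where
  toFun f := fun n m _ => f n m ⊤
  map_zero' := rfl
  map_add' _ _ := rfl
theorem slT_A (k) : Commute slT (opA k) := rfl
theorem slT_B (k) : Commute slT (opB k) := rfl

theorem top_B3 : slT (opB 3 KE) = slT (opB 2 (opA 1 KE)) := by
  ext n m L
  change opB 3 KE n m ⊤ = opB 2 (opA 1 KE) n m ⊤
  simp only [opB_apply, opA_apply, iA, ← ENNReal.tsum_mul_left]
  rfl

noncomputable def KN : FF := slN KE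
noncomputable def KM : FF := slM KE
theorem KN_BC (k : ℕ) : opC k KN = opB k KN := by
  ext n m L
  rw [opB_apply, opC_apply]
  refine tsum_congr fun l => ?_
  change wtC k L l * KE 0 m l = wt k m l * KE 0 l L
  simp only [KE_zero_left, wtC, wt, Nat.cast_lt]
  by_cases h1 : m < l
  · have : 0 < l := by omega
    by_cases h2 : (l : ℕ∞) < L <;> simp [h1, h2, this]
  · simp [h1]
theorem KM_AC (k : ℕ) : opC k KM = opA k KM := by
  ext n m L
  rw [opA_apply, opC_apply]
  refine tsum_congr fun l => ?_
  change wtC k L l * KE n 0 l = wt k n l * KE l 0 L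
  simp only [KE_zero_right, wtC, wt, Nat.cast_lt]
  by_cases h1 : n < l
  · have : 0 < l := by omega
    by_cases h2 : (l : ℕ∞) < L <;> simp [h1, h2, this]
  · simp [h1]

theorem evA (ks : List ℕ) (n : ℕ) : (ks.map opA).prod KE n 0 ⊤ = zE ks n := by
  induction ks generalizing n with
  | nil => simp [zE, KE_zero_right]
  | cons k ks ih =>
    rw [List.map_cons, List.prod_cons]
    change opA k ((ks.map opA).prod KE) n 0 ⊤ = _
    rw [opA_apply, zE]
    simp only [ih]
theorem evB (ks : List ℕ) (n : ℕ) : (ks.map opB).prod KE 0 n ⊤ = zE ks n := by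
  induction ks generalizing n with
  | nil => simp [zE, KE_zero_left]
  | cons k ks ih =>
    rw [List.map_cons, List.prod_cons]
    change opB k ((ks.map opB).prod KE) 0 n ⊤ = _
    rw [opB_apply, zE]
    simp only [ih]
theorem pow_swap {X Y : AddMonoid.End FF} (h : Commute X Y) {v : FF} (hv : X v = Y v) (k : ℕ) :
    (X ^ k) v = (Y ^ k) v := by
  induction k with
  | zero => rfl
  | succ k ih =>
    rw [pow_succ]
    change (X ^ k) (X v) = _
    rw [hv]
    change (X ^ k * Y) v = _
    rw [(h.pow_left k).eq]
    change Y ((X ^ k) v) = _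
    rw [ih, pow_succ']
    rfl

theorem pow_swap2 {X Y : AddMonoid.End FF} (h : Commute X Y) {v : FF} (hv : X v = Y v) (j k : ℕ) :
    (X ^ j) ((Y ^ k) v) = (Y ^ (k + j)) v := by
  change (X ^ j * Y ^ k) v = _
  rw [(h.pow_pow j k).eq]
  change (Y ^ k) ((X ^ j) v) = _
  rw [pow_swap h hv, pow_add]
  rfl

/-- reduction of a mixed term, first kind -/
theorem term1 (a b c : ℕ) :
    (opC 2 ^ c * (opB 2 ^ b * opB 3 * opC 3) * opA 2 ^ a) KE 0 0 ⊤
      = zE (List.replicate b 2 ++ [3] ++ List.replicate a 2 ++ [3] ++ List.replicate c 2) 0 := by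
  have h1 : (opC 2 ^ c * (opB 2 ^ b * opB 3 * opC 3) * opA 2 ^ a) KE
      = (opC 2 ^ c * (opB 2 ^ b * opB 3 * opC 3) * opC 2 ^ a) KE :=
    congrArg (opC 2 ^ c * (opB 2 ^ b * opB 3 * opC 3)) (pow_swap (comm_AC 2 2) KA_KC a)
  have hcom : Commute slN (opC 2 ^ c * (opB 2 ^ b * opB 3 * opC 3) * opC 2 ^ a) :=
    (((slN_C 2).pow_right c).mul_right ((((slN_B 2).pow_right b).mul_right (slN_B 3)).mul_right
      (slN_C 3))).mul_right ((slN_C 2).pow_right a)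
  have h2 : (opC 2 ^ c * (opB 2 ^ b * opB 3 * opC 3) * opC 2 ^ a) KE 0 0 ⊤
      = (opC 2 ^ c * (opB 2 ^ b * opB 3 * opC 3) * opC 2 ^ a) KN 0 0 ⊤ :=
    congrFun (congrFun (congrFun (DFunLike.congr_fun hcom.eq KE) 0) 0) ⊤
  have h3 : (opC 2 ^ c * (opB 2 ^ b * opB 3 * opC 3) * opC 2 ^ a) KN
      = (opC 2 ^ c * (opB 2 ^ b * opB 3 * opC 3) * opB 2 ^ a) KN :=
    congrArg (opC 2 ^ c * (opB 2 ^ b * opB 3 * opC 3))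
      (pow_swap (comm_BC 2 2).symm (KN_BC 2) a)
  have h4 : opC 2 ^ c * (opB 2 ^ b * opB 3 * opC 3) * opB 2 ^ a
      = opB 2 ^ b * opB 3 * opB 2 ^ a * opC 2 ^ c * opC 3 := by
    have c1 : Commute (opC 2 ^ c) (opB 2 ^ b * opB 3) :=
      ((comm_BC 2 2).symm.pow_pow c b).mul_right ((comm_BC 3 2).symm.pow_left c)
    have c2 : Commute (opC 2 ^ c * opC 3) (opB 2 ^ a) :=
      ((comm_BC 2 2).symm.pow_pow c a).mul_left ((comm_BC 2 3).symm.pow_right a)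
    calc _ = (opC 2 ^ c * (opB 2 ^ b * opB 3)) * opC 3 * opB 2 ^ a := by simp only [mul_assoc]
      _ = (opB 2 ^ b * opB 3) * ((opC 2 ^ c * opC 3) * opB 2 ^ a) := by
        rw [c1.eq]; simp only [mul_assoc]
      _ = _ := by rw [c2.eq]; simp only [mul_assoc]
  have h5 : (opB 2 ^ b * opB 3 * opB 2 ^ a * opC 2 ^ c * opC 3) KN
      = (opB 2 ^ b * opB 3 * opB 2 ^ a * opB 3 * opB 2 ^ c) KN := by
    have : (opC 2 ^ c * opC 3) KN = (opB 3 * opB 2 ^ c) KN := by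
      change (opC 2 ^ c) (opC 3 KN) = opB 3 ((opB 2 ^ c) KN)
      rw [KN_BC, ← pow_swap (comm_BC 2 2).symm (KN_BC 2)]
      exact DFunLike.congr_fun ((comm_BC 3 2).symm.pow_left c).eq KN
    exact congrArg (opB 2 ^ b * opB 3 * opB 2 ^ a) this
  have hcom2 : Commute slN (opB 2 ^ b * opB 3 * opB 2 ^ a * opB 3 * opB 2 ^ c) :=
    (((((slN_B 2).pow_right b).mul_right (slN_B 3)).mul_right ((slN_B 2).pow_right a)).mul_right
      (slN_B 3)).mul_right ((slN_B 2).pow_right c)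
  have h6 : (opB 2 ^ b * opB 3 * opB 2 ^ a * opB 3 * opB 2 ^ c) KE 0 0 ⊤
      = (opB 2 ^ b * opB 3 * opB 2 ^ a * opB 3 * opB 2 ^ c) KN 0 0 ⊤ :=
    congrFun (congrFun (congrFun (DFunLike.congr_fun hcom2.eq KE) 0) 0) ⊤
  rw [h1, h2, h3, h4, h5, ← h6, ← evB]
  simp [mul_assoc]

theorem term2 (a b c : ℕ) :
    (opC 2 ^ c * (opA 2 ^ b * opA 3 * opC 3) * opB 2 ^ a) KE 0 0 ⊤
      = zE (List.replicate b 2 ++ [3] ++ List.replicate a 2 ++ [3] ++ List.replicate c 2) 0 := by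
  have KB_KC : opB 2 KE = opC 2 KE := KA_KB.symm.trans KA_KC
  have h1 : (opC 2 ^ c * (opA 2 ^ b * opA 3 * opC 3) * opB 2 ^ a) KE
      = (opC 2 ^ c * (opA 2 ^ b * opA 3 * opC 3) * opC 2 ^ a) KE :=
    congrArg (opC 2 ^ c * (opA 2 ^ b * opA 3 * opC 3)) (pow_swap (comm_BC 2 2) KB_KC a)
  have hcom : Commute slM (opC 2 ^ c * (opA 2 ^ b * opA 3 * opC 3) * opC 2 ^ a) :=
    (((slM_C 2).pow_right c).mul_right ((((slM_A 2).pow_right b).mul_right (slM_A 3)).mul_right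
      (slM_C 3))).mul_right ((slM_C 2).pow_right a)
  have h2 : (opC 2 ^ c * (opA 2 ^ b * opA 3 * opC 3) * opC 2 ^ a) KE 0 0 ⊤
      = (opC 2 ^ c * (opA 2 ^ b * opA 3 * opC 3) * opC 2 ^ a) KM 0 0 ⊤ :=
    congrFun (congrFun (congrFun (DFunLike.congr_fun hcom.eq KE) 0) 0) ⊤
  have h3 : (opC 2 ^ c * (opA 2 ^ b * opA 3 * opC 3) * opC 2 ^ a) KM
      = (opC 2 ^ c * (opA 2 ^ b * opA 3 * opC 3) * opA 2 ^ a) KM :=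
    congrArg (opC 2 ^ c * (opA 2 ^ b * opA 3 * opC 3))
      (pow_swap (comm_AC 2 2).symm (KM_AC 2) a)
  have h4 : opC 2 ^ c * (opA 2 ^ b * opA 3 * opC 3) * opA 2 ^ a
      = opA 2 ^ b * opA 3 * opA 2 ^ a * opC 2 ^ c * opC 3 := by
    have c1 : Commute (opC 2 ^ c) (opA 2 ^ b * opA 3) :=
      ((comm_AC 2 2).symm.pow_pow c b).mul_right ((comm_AC 3 2).symm.pow_left c)
    have c2 : Commute (opC 2 ^ c * opC 3) (opA 2 ^ a) :=
      ((comm_AC 2 2).symm.pow_pow c a).mul_left ((comm_AC 2 3).symm.pow_right a)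
    calc _ = (opC 2 ^ c * (opA 2 ^ b * opA 3)) * opC 3 * opA 2 ^ a := by simp only [mul_assoc]
      _ = (opA 2 ^ b * opA 3) * ((opC 2 ^ c * opC 3) * opA 2 ^ a) := by
        rw [c1.eq]; simp only [mul_assoc]
      _ = _ := by rw [c2.eq]; simp only [mul_assoc]
  have h5 : (opA 2 ^ b * opA 3 * opA 2 ^ a * opC 2 ^ c * opC 3) KM
      = (opA 2 ^ b * opA 3 * opA 2 ^ a * opA 3 * opA 2 ^ c) KM := by
    have : (opC 2 ^ c * opC 3) KM = (opA 3 * opA 2 ^ c) KM := by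
      change (opC 2 ^ c) (opC 3 KM) = opA 3 ((opA 2 ^ c) KM)
      rw [KM_AC, ← pow_swap (comm_AC 2 2).symm (KM_AC 2)]
      exact DFunLike.congr_fun ((comm_AC 3 2).symm.pow_left c).eq KM
    exact congrArg (opA 2 ^ b * opA 3 * opA 2 ^ a) this
  have hcom2 : Commute slM (opA 2 ^ b * opA 3 * opA 2 ^ a * opA 3 * opA 2 ^ c) :=
    (((((slM_A 2).pow_right b).mul_right (slM_A 3)).mul_right ((slM_A 2).pow_right a)).mul_right
      (slM_A 3)).mul_right ((slM_A 2).pow_right c)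
  have h6 : (opA 2 ^ b * opA 3 * opA 2 ^ a * opA 3 * opA 2 ^ c) KE 0 0 ⊤
      = (opA 2 ^ b * opA 3 * opA 2 ^ a * opA 3 * opA 2 ^ c) KM 0 0 ⊤ :=
    congrFun (congrFun (congrFun (DFunLike.congr_fun hcom2.eq KE) 0) 0) ⊤
  rw [h1, h2, h3, h4, h5, ← h6, ← evA]
  simp [mul_assoc]

theorem term3 (a b c : ℕ) :
    (opC 2 ^ c * opA 2 ^ a * opB 2 ^ b) (opA 2 (opB 2 (opC 2 KE))) 0 0 ⊤
      = zE (List.replicate (a + 1 + (b + 1) + (c + 1)) 2) 0 := by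
  have e0 : opC 2 KE = (opA 2 ^ 1) KE := by rw [pow_one, KA_KC]
  have e1 : opB 2 (opC 2 KE) = (opA 2 ^ 2) KE := by
    rw [e0]
    have := pow_swap2 (comm_AB 2 2).symm KA_KB.symm 1 1
    rwa [pow_one (opB 2)] at this
  have e2 : opA 2 (opB 2 (opC 2 KE)) = (opA 2 ^ 3) KE := by
    rw [e1, pow_succ' (opA 2) 2]; rfl
  have e3 : (opC 2 ^ c * opA 2 ^ a * opB 2 ^ b) ((opA 2 ^ 3) KE)
      = (opA 2 ^ (a + 1 + (b + 1) + (c + 1))) KE := by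
    change (opC 2 ^ c) ((opA 2 ^ a) ((opB 2 ^ b) ((opA 2 ^ 3) KE))) = _
    rw [pow_swap2 (comm_AB 2 2).symm KA_KB.symm,
      pow_swap2 (Commute.refl (opA 2)) rfl,
      pow_swap2 (comm_AC 2 2).symm KA_KC.symm]
    congr 2
    ring
  rw [e2, e3, ← evA]
  simp

theorem main_zE (a b c : ℕ) :
    zE (List.replicate a 2 ++ [3] ++ List.replicate c 2 ++ [1] ++ List.replicate (b + 1) 2) 0
      = zE (List.replicate (a + 1 + (b + 1) + (c + 1)) 2) 0
        + zE (List.replicate a 2 ++ [3] ++ List.replicate b 2 ++ [3] ++ List.replicate c 2) 0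
        + zE (List.replicate b 2 ++ [3] ++ List.replicate a 2 ++ [3] ++ List.replicate c 2) 0 := by
  have s0 : zE (List.replicate a 2 ++ [3] ++ List.replicate c 2 ++ [1]
      ++ List.replicate (b + 1) 2) 0
      = (opA 2 ^ a * opA 3 * opA 2 ^ c * opA 1 * opA 2 ^ (b + 1)) KE 0 0 ⊤ := by
    rw [← evA]
    simp [mul_assoc]
  have s1 : (opA 2 ^ a * opA 3 * opA 2 ^ c * opA 1 * opA 2 ^ (b + 1)) KE
      = (opA 2 ^ a * opA 3 * opA 2 ^ c * opB 2 ^ b) (opB 2 (opA 1 KE)) := by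
    have : (opA 1 * opA 2 ^ (b + 1)) KE = (opB 2 ^ b) (opB 2 (opA 1 KE)) := by
      change opA 1 ((opA 2 ^ (b + 1)) KE) = (opB 2 ^ b * opB 2 * opA 1) KE
      rw [pow_swap (comm_AB 2 2) KA_KB, ← pow_succ, ← ((comm_AB 1 2).pow_right (b + 1)).eq]
      rfl
    exact congrArg (opA 2 ^ a * opA 3 * opA 2 ^ c) this
  have hcom : Commute slT (opA 2 ^ a * opA 3 * opA 2 ^ c * opB 2 ^ b) :=
    ((((slT_A 2).pow_right a).mul_right (slT_A 3)).mul_right ((slT_A 2).pow_right c)).mul_right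
      ((slT_B 2).pow_right b)
  have s2 : (opA 2 ^ a * opA 3 * opA 2 ^ c * opB 2 ^ b) (opB 2 (opA 1 KE)) 0 0 ⊤
      = (opA 2 ^ a * opA 3 * opA 2 ^ c * opB 2 ^ b) (opB 3 KE) 0 0 ⊤ := by
    have h1 := congrFun (congrFun (congrFun
      (DFunLike.congr_fun hcom.eq (opB 2 (opA 1 KE))) 0) 0) ⊤
    have h2 := congrFun (congrFun (congrFun
      (DFunLike.congr_fun hcom.eq (opB 3 KE)) 0) 0) ⊤
    refine h1.trans (Eq.trans ?_ h2.symm)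
    change (opA 2 ^ a * opA 3 * opA 2 ^ c * opB 2 ^ b) (slT (opB 2 (opA 1 KE))) 0 0 ⊤
      = (opA 2 ^ a * opA 3 * opA 2 ^ c * opB 2 ^ b) (slT (opB 3 KE)) 0 0 ⊤
    rw [top_B3]
  have s3 : (opA 2 ^ a * opA 3 * opA 2 ^ c * opB 2 ^ b) (opB 3 KE)
      = (opC 2 ^ c * opA 2 ^ a * opB 2 ^ b) (opA 3 (opB 3 KE)) := by
    have c1 : Commute (opA 2 ^ c) (opB 2 ^ b * opB 3) :=
      ((comm_AB 2 2).pow_pow c b).mul_right ((comm_AB 2 3).pow_left c)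
    have c2 : Commute (opC 2 ^ c) (opA 2 ^ a * opA 3 * (opB 2 ^ b * opB 3)) :=
      (((comm_AC 2 2).symm.pow_pow c a).mul_right ((comm_AC 3 2).symm.pow_left c)).mul_right
        (((comm_BC 2 2).symm.pow_pow c b).mul_right ((comm_BC 3 2).symm.pow_left c))
    have c3 : Commute (opA 3) (opB 2 ^ b) := (comm_AB 3 2).pow_right b
    calc (opA 2 ^ a * opA 3 * opA 2 ^ c * opB 2 ^ b) (opB 3 KE)
        = (opA 2 ^ a * opA 3 * (opA 2 ^ c * (opB 2 ^ b * opB 3))) KE := rfl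
      _ = (opA 2 ^ a * opA 3 * (opB 2 ^ b * opB 3)) ((opA 2 ^ c) KE) := by rw [c1.eq]; rfl
      _ = (opA 2 ^ a * opA 3 * (opB 2 ^ b * opB 3) * opC 2 ^ c) KE := by
        rw [pow_swap (comm_AC 2 2) KA_KC]; rfl
      _ = (opC 2 ^ c * (opA 2 ^ a * ((opA 3 * opB 2 ^ b) * opB 3))) KE := by
        rw [← c2.eq]; rfl
      _ = _ := by rw [c3.eq]; rfl
  rw [s0, s1, s2, s3, K3, map_add, map_add]
  change (opC 2 ^ c * opA 2 ^ a * opB 2 ^ b) (opB 3 (opC 3 KE)) 0 0 ⊤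
    + (opC 2 ^ c * opA 2 ^ a * opB 2 ^ b) (opA 3 (opC 3 KE)) 0 0 ⊤
    + (opC 2 ^ c * opA 2 ^ a * opB 2 ^ b) (opA 2 (opB 2 (opC 2 KE))) 0 0 ⊤ = _
  rw [term3, ← term1 a b c, ← term2 b a c]
  have t1 : (opC 2 ^ c * opA 2 ^ a * opB 2 ^ b) (opB 3 (opC 3 KE))
      = (opC 2 ^ c * (opB 2 ^ b * opB 3 * opC 3) * opA 2 ^ a) KE := by
    have c1 : Commute (opA 2 ^ a) (opB 2 ^ b * opB 3 * opC 3) :=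
      (((comm_AB 2 2).pow_pow a b).mul_right ((comm_AB 2 3).pow_left a)).mul_right
        ((comm_AC 2 3).pow_left a)
    rw [mul_assoc (opC 2 ^ c) (opB 2 ^ b * opB 3 * opC 3), ← c1.eq]
    rfl
  have t2 : (opC 2 ^ c * opA 2 ^ a * opB 2 ^ b) (opA 3 (opC 3 KE))
      = (opC 2 ^ c * (opA 2 ^ a * opA 3 * opC 3) * opB 2 ^ b) KE := by
    have c1 : Commute (opB 2 ^ b) (opA 3 * opC 3) :=
      ((comm_AB 3 2).symm.pow_left b).mul_right ((comm_BC 2 3).pow_left b)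
    rw [mul_assoc (opA 2 ^ a), mul_assoc (opC 2 ^ c) (opA 2 ^ a * _),
      mul_assoc (opA 2 ^ a), ← c1.eq]
    rfl
  rw [t1, t2]
  abel

theorem zE_fin (ks : List ℕ) (h : ∀ k ∈ ks, 2 ≤ k) : zE ks 0 ≠ ⊤ := by
  obtain ⟨M, hM, hb⟩ := zE_ne_top ks h
  exact ne_top_of_le_ne_top hM (hb 0)

/-- Specializing `Z(w₁ τ(w₂)) = Z(w₁ ⋆ w₂)` to `w₁ = z₂^{a-1} z₃ z₂^{c-1}`,
`w₂ = z₂^{b-1} z₃` : the purely algebraic ⋆-product identity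
`z₂^{a−1} z₃ z₂^{c−1} ⋆ z₂^{b−1} z₃
  = z₂^{a+b+c} + z₂^{a−1} z₃ z₂^{b−1} z₃ z₂^{c−1} + z₂^{b−1} z₃ z₂^{a−1} z₃ z₂^{c−1}`,
and the resulting MZV identity
`ζ({2}^{a−1},3,{2}^{c−1},1,{2}^b) = ζ({2}^{a+b+c}) + ζ({2}^{a−1},3,{2}^{b−1},3,{2}^{c−1})
  + ζ({2}^{b−1},3,{2}^{a−1},3,{2}^{c−1})`. -/
theorem star_specialization (a b c : ℕ) (ha : 0 < a) (hb : 0 < b) (hc : 0 < c) :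
    starW (List.replicate (a - 1) 2 ++ [3] ++ List.replicate (c - 1) 2)
        (List.replicate (b - 1) 2 ++ [3])
      = Finsupp.single (List.replicate (a + b + c) 2) 1
        + Finsupp.single (List.replicate (a - 1) 2 ++ [3] ++ List.replicate (b - 1) 2
            ++ [3] ++ List.replicate (c - 1) 2) 1
        + Finsupp.single (List.replicate (b - 1) 2 ++ [3] ++ List.replicate (a - 1) 2
            ++ [3] ++ List.replicate (c - 1) 2) 1
    ∧ mzv (List.replicate (a - 1) 2 ++ [3] ++ List.replicate (c - 1) 2 ++ [1] ++
          List.replicate b 2)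
        = mzv (List.replicate (a + b + c) 2)
          + mzv (List.replicate (a - 1) 2 ++ [3] ++ List.replicate (b - 1) 2 ++ [3] ++
              List.replicate (c - 1) 2)
          + mzv (List.replicate (b - 1) 2 ++ [3] ++ List.replicate (a - 1) 2 ++ [3] ++
              List.replicate (c - 1) 2) := by
  obtain ⟨a, rfl⟩ := Nat.exists_eq_add_of_lt ha
  obtain ⟨b, rfl⟩ := Nat.exists_eq_add_of_lt hb
  obtain ⟨c, rfl⟩ := Nat.exists_eq_add_of_lt hc
  simp only [Nat.zero_add, Nat.add_sub_cancel]
  refine ⟨star_part a b c, ?_⟩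
  simp only [mzv_eq]
  rw [main_zE, ENNReal.toReal_add, ENNReal.toReal_add]
  · exact zE_fin _ (by simp)
  · exact zE_fin _ (by simp; omega)
  · exact ENNReal.add_ne_top.2 ⟨zE_fin _ (by simp), zE_fin _ (by simp; omega)⟩
  · exact zE_fin _ (by simp; omega)
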